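/- The quotient group Λ2♯/Λ2 has exactly 12 elements, consisting of: the zero coset; exactly 6 cosets of minimal norm 1/3, each of order 6 in the group; exactly 3 cosets of minimal norm 1, each of order 2; and exactly 2 cosets of minimal norm 4/3, each of order 3. Here the minimal norm of a coset is the minimum of ‖x‖² over x in the coset. -/

import Mathlib

noncomputable section

open scoped RealInnerProductSpace

/-- `ℝ^n` with the standard inner product. -/
abbrev E (n : ℕ) := EuclideanSpace ℝ (Fin n)

/-- The standard basis vector `ε i`. -/
def εv {n : ℕ} (i : Fin n) : E n := EuclideanSpace.single i 1

/-- The vector of `ℝ^n` with the given coordinates. -/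
def vec {n : ℕ} (x : Fin n → ℝ) : E n := (WithLp.equiv 2 (Fin n → ℝ)).symm x

/-- The vector of `ℝ^n` with the given integer coordinates. -/
def intVec {n : ℕ} (x : Fin n → ℤ) : E n := (WithLp.equiv 2 (Fin n → ℝ)).symm fun i => (x i : ℝ)

/-- A lattice is integral if all pairwise inner products of its elements are integers. -/
def LatticeIsIntegral {n : ℕ} (L : Submodule ℤ (E n)) : Prop :=
  ∀ x ∈ L, ∀ y ∈ L, ∃ k : ℤ, ⟪x, y⟫ = (k : ℝ)

/-- Two lattices are isometric if a linear isometry of the ambient space carries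
one onto the other. -/
def IsometricLattices {n : ℕ} (L M : Submodule ℤ (E n)) : Prop :=
  ∃ g : E n ≃ₗᵢ[ℝ] E n, g '' (L : Set (E n)) = (M : Set (E n))

/-- The laminated lattice `Λ₂ = {√2·x : x ∈ ℤ³, x 0 + x 1 + x 2 = 0} ≅ √2·A₂`. -/
def Λ2 : Submodule ℤ (E 3) :=
  Submodule.span ℤ
    {v : E 3 | ∃ x : Fin 3 → ℤ, x 0 + x 1 + x 2 = 0 ∧ v = Real.sqrt 2 • intVec x}

/-- The dual lattice of `Λ` inside the hyperplane `V = {x : ∑ i, x i = 0}`: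
`Λ♯ = {x ∈ V : ⟪x,y⟫ ∈ ℤ for all y ∈ Λ}`. -/
def dualLatticeIn {n : ℕ} (Λ : Submodule ℤ (E n)) : Submodule ℤ (E n) where
  carrier := {x | (∑ i, x i = 0) ∧ ∀ y ∈ Λ, ∃ k : ℤ, ⟪x, y⟫ = (k : ℝ)}
  zero_mem' := ⟨by simp, fun y _ => ⟨0, by simp⟩⟩
  add_mem' := by
    rintro a b ⟨ha0, ha⟩ ⟨hb0, hb⟩
    refine ⟨?_, ?_⟩
    · simp only [PiLp.add_apply, Finset.sum_add_distrib, ha0, hb0, add_zero]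
    · intro y hy
      obtain ⟨k, hk⟩ := ha y hy
      obtain ⟨l, hl⟩ := hb y hy
      exact ⟨k + l, by rw [inner_add_left, hk, hl]; push_cast; ring⟩
  smul_mem' := by
    rintro c x ⟨hx0, hx⟩
    refine ⟨?_, ?_⟩
    · simp only [PiLp.smul_apply, smul_eq_mul, zsmul_eq_mul, ← Finset.mul_sum, hx0, mul_zero]
    · intro y hy
      obtain ⟨k, hk⟩ := hx y hy
      refine ⟨c * k, ?_⟩
      rw [← Int.cast_smul_eq_zsmul ℝ c x, real_inner_smul_left, hk]
      push_cast
      ring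

/-- The quotient abelian group `Λ♯/Λ`. -/
abbrev DualQuotIn {n : ℕ} (Λ : Submodule ℤ (E n)) :=
  (dualLatticeIn Λ) ⧸ (Λ.comap (dualLatticeIn Λ).subtype)

/-- The coset `c ∈ Λ♯/Λ` has minimal norm `m`, i.e. `m` is the minimum of `‖x‖²`
over `x` in the coset `c`. -/
def CosetMinNormIn {n : ℕ} (Λ : Submodule ℤ (E n)) (c : DualQuotIn Λ) (m : ℝ) : Prop :=
  IsLeast {r : ℝ | ∃ x : dualLatticeIn Λ, Submodule.Quotient.mk x = c ∧ r = ‖(x : E n)‖ ^ 2} m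

/-!
In the basis of `Λ2♯` dual to the scaled simple roots of `A₂`, the squared norm is
`(a² + ab + b²) / 3`, and `Λ2` consists of the vectors with `a ≡ 0 mod 2` and `b ≡ a mod 6`, so
`Λ2♯/Λ2 ≃ ℤ/2 × ℤ/6`. On a coset of order 2 one has `b ≡ a mod 3`, hence `3 ∣ a² + ab + b²`; on a
coset of order 3 both `a` and `b` are even, hence `4 ∣ a² + ab + b²`. As the form is positive
definite, `1`, `3` and `4` bound it below on the cosets of order 6, 2 and 3 respectively, and small
vectors attain these bounds.
-/

section

variable {n : ℕ}

lemma mem_dualLatticeIn_span {S : Set (E n)} {x : E n} :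
    x ∈ dualLatticeIn (Submodule.span ℤ S) ↔
      (∑ i, x i = 0) ∧ ∀ y ∈ S, ∃ k : ℤ, ⟪x, y⟫ = (k : ℝ) := by
  refine and_congr_right fun _ => ⟨fun h y hy => h y (Submodule.subset_span hy), fun h y hy => ?_⟩
  induction hy using Submodule.span_induction with
  | mem y hy => exact h y hy
  | zero => exact ⟨0, by simp⟩
  | add y z _ _ hy hz =>
    obtain ⟨k, hk⟩ := hy
    obtain ⟨l, hl⟩ := hz
    exact ⟨k + l, by rw [inner_add_right, hk, hl, Int.cast_add]⟩
  | smul m y _ hy =>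
    obtain ⟨k, hk⟩ := hy
    exact ⟨m * k, by
      rw [← Int.cast_smul_eq_zsmul ℝ m y, real_inner_smul_right, hk, Int.cast_mul]⟩

lemma sum_smul_intVec (r : ℝ) (x : Fin n → ℤ) :
    ∑ i, (r • intVec x) i = r * ((∑ i, x i : ℤ) : ℝ) := by
  simp [intVec, Finset.mul_sum]

lemma inner_smul_intVec (r s : ℝ) (x y : Fin n → ℤ) :
    ⟪r • intVec x, s • intVec y⟫ = r * s * ((x ⬝ᵥ y : ℤ) : ℝ) := by
  rw [real_inner_smul_left, real_inner_smul_right, ← mul_assoc]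
  simp [intVec, PiLp.inner_apply, dotProduct, mul_comm]

end

lemma ncard_setOf_addOrderOf_eq {A B : Type*} [AddMonoid A] [AddMonoid B] (e : A ≃+ B) (n : ℕ) :
    {a : A | addOrderOf a = n}.ncard = {b : B | addOrderOf b = n}.ncard := by
  have preimage_eq : {a : A | addOrderOf a = n} = e ⁻¹' {b : B | addOrderOf b = n} := by
    ext a
    simp
  rw [preimage_eq, Set.ncard_preimage_of_injective_subset_range e.injective
    (by simp only [e.surjective.range_eq, Set.subset_univ])]

lemma ncard_setOf_addOrderOf_eq_card_filter {A : Type*} [AddMonoid A] [Fintype A] [DecidableEq A]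
    {n : ℕ} (hn : 0 < n) :
    {a : A | addOrderOf a = n}.ncard =
      (Finset.univ.filter fun a : A => n • a = 0 ∧ ∀ m < n, 0 < m → m • a ≠ 0).card := by
  simp only [← Set.ncard_coe_finset, Finset.coe_filter, Finset.mem_univ, true_and,
    addOrderOf_eq_iff hn]

lemma ne_zero_of_one_lt_addOrderOf {A : Type*} [AddMonoid A] {a : A} (h : 1 < addOrderOf a) :
    a ≠ 0 :=
  fun ha => h.ne' (AddMonoid.addOrderOf_eq_one_iff.2 ha)

lemma eq_zero_or_addOrderOf_eq_of_six_nsmul_eq_zero {A : Type*} [AddMonoid A] {a : A}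
    (ha : 6 • a = 0) : a = 0 ∨ addOrderOf a = 6 ∨ addOrderOf a = 2 ∨ addOrderOf a = 3 := by
  have mem_divisors : addOrderOf a ∈ Nat.divisors 6 :=
    Nat.mem_divisors.2 ⟨addOrderOf_dvd_of_nsmul_eq_zero ha, by norm_num⟩
  rw [show Nat.divisors 6 = {1, 2, 3, 6} by decide] at mem_divisors
  rw [← AddMonoid.addOrderOf_eq_one_iff]
  simp only [Finset.mem_insert, Finset.mem_singleton] at mem_divisors
  tauto

/-- The simple root `ε₀ - ε₁` of `A₂` scaled by `√2`, the first basis vector of `Λ2`. -/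
def root₁ : E 3 := √2 • intVec ![1, -1, 0]

/-- The simple root `ε₁ - ε₂` of `A₂` scaled by `√2`, the second basis vector of `Λ2`. -/
def root₂ : E 3 := √2 • intVec ![0, 1, -1]

/-- The fundamental weight dual to `root₁`: it lies in the hyperplane `∑ i, x i = 0`, pairs to `1`
with `root₁` and is orthogonal to `root₂`. -/
def weight₁ : E 3 := (√2 / 6) • intVec ![2, -1, -1]

/-- The fundamental weight dual to `root₂`: it lies in the hyperplane `∑ i, x i = 0`, pairs to `1`
with `root₂` and is orthogonal to `root₁`. -/
def weight₂ : E 3 := (√2 / 6) • intVec ![1, 1, -2]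

lemma Λ2_eq_span_roots : Λ2 = Submodule.span ℤ {root₁, root₂} := by
  apply le_antisymm
  · refine Submodule.span_le.2 ?_
    rintro _ ⟨x, hx, rfl⟩
    refine Submodule.mem_span_pair.2 ⟨x 0, -x 2, ?_⟩
    have h1 : x 1 = -x 0 - x 2 := by omega
    ext i
    fin_cases i <;> simp [root₁, root₂, intVec, h1] <;> ring
  · refine Submodule.span_le.2 ?_
    rintro _ (rfl | rfl)
    · exact Submodule.subset_span ⟨_, by simp, rfl⟩
    · exact Submodule.subset_span ⟨_, by simp, rfl⟩

/-- The vector with coordinates `z` in the basis `weight₁`, `weight₂` of `Λ2♯`. -/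
def weightVec : ℤ × ℤ →ₗ[ℤ] E 3 :=
  (LinearMap.toSpanSingleton ℤ (E 3) weight₁).coprod (LinearMap.toSpanSingleton ℤ (E 3) weight₂)

lemma weightVec_apply (z : ℤ × ℤ) : weightVec z = z.1 • weight₁ + z.2 • weight₂ := rfl

lemma weightVec_eq_smul_intVec (z : ℤ × ℤ) :
    weightVec z = (√2 / 6) • intVec ![2 * z.1 + z.2, z.2 - z.1, -z.1 - 2 * z.2] := by
  ext i
  fin_cases i <;> simp [weightVec_apply, weight₁, weight₂, intVec] <;> ring

lemma sum_weightVec (z : ℤ × ℤ) : ∑ i, weightVec z i = 0 := by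
  have coord_sum_eq : ∑ i, ![2 * z.1 + z.2, z.2 - z.1, -z.1 - 2 * z.2] i = 0 := by
    simp only [Fin.sum_univ_three, Matrix.cons_val]
    ring
  rw [weightVec_eq_smul_intVec, sum_smul_intVec, coord_sum_eq, Int.cast_zero, mul_zero]

lemma inner_weightVec_root₁ (z : ℤ × ℤ) : ⟪weightVec z, root₁⟫ = z.1 := by
  rw [weightVec_eq_smul_intVec, root₁, inner_smul_intVec]
  have dot_eq : ![2 * z.1 + z.2, z.2 - z.1, -z.1 - 2 * z.2] ⬝ᵥ ![1, -1, 0] = 3 * z.1 := by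
    rw [Matrix.vec3_dotProduct']
    ring
  rw [dot_eq, Int.cast_mul]
  linear_combination (z.1 / 2 : ℝ) * Real.sq_sqrt zero_le_two

lemma inner_weightVec_root₂ (z : ℤ × ℤ) : ⟪weightVec z, root₂⟫ = z.2 := by
  rw [weightVec_eq_smul_intVec, root₂, inner_smul_intVec]
  have dot_eq : ![2 * z.1 + z.2, z.2 - z.1, -z.1 - 2 * z.2] ⬝ᵥ ![0, 1, -1] = 3 * z.2 := by
    rw [Matrix.vec3_dotProduct']
    ring
  rw [dot_eq, Int.cast_mul]
  linear_combination (z.2 / 2 : ℝ) * Real.sq_sqrt zero_le_two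

lemma weightVec_injective : Function.Injective weightVec := by
  intro z w h
  ext
  · simpa [inner_weightVec_root₁] using congrArg (⟪·, root₁⟫) h
  · simpa [inner_weightVec_root₂] using congrArg (⟪·, root₂⟫) h

lemma inner_root₁ (x : E 3) : ⟪x, root₁⟫ = √2 * (x 0 - x 1) := by
  simp [root₁, intVec, PiLp.inner_apply, Fin.sum_univ_three, mul_add, sub_eq_add_neg]

lemma inner_root₂ (x : E 3) : ⟪x, root₂⟫ = √2 * (x 1 - x 2) := by
  simp [root₂, intVec, PiLp.inner_apply, Fin.sum_univ_three, mul_add, sub_eq_add_neg]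

lemma eq_inner_roots_smul_weights {x : E 3} (hx : ∑ i, x i = 0) :
    x = ⟪x, root₁⟫ • weight₁ + ⟪x, root₂⟫ • weight₂ := by
  rw [Fin.sum_univ_three] at hx
  ext i
  rw [PiLp.add_apply, PiLp.smul_apply, PiLp.smul_apply, inner_root₁, inner_root₂]
  fin_cases i <;>
    simp only [Fin.zero_eta, Fin.mk_one, Fin.reduceFinMk, weight₁, weight₂, intVec,
      WithLp.equiv_symm_apply, PiLp.smul_apply, smul_eq_mul, Matrix.cons_val, Int.cast_ofNat,
      Int.cast_one, Int.cast_neg]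
  · linear_combination hx / 3 - (2 * x 0 - x 1 - x 2) / 6 * Real.sq_sqrt zero_le_two
  · linear_combination hx / 3 - (2 * x 1 - x 0 - x 2) / 6 * Real.sq_sqrt zero_le_two
  · linear_combination hx / 3 - (2 * x 2 - x 0 - x 1) / 6 * Real.sq_sqrt zero_le_two

lemma range_weightVec : LinearMap.range weightVec = dualLatticeIn Λ2 := by
  rw [Λ2_eq_span_roots]
  ext x
  rw [mem_dualLatticeIn_span]
  constructor
  · rintro ⟨z, rfl⟩
    refine ⟨sum_weightVec z, ?_⟩
    rintro _ (rfl | rfl)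
    · exact ⟨z.1, inner_weightVec_root₁ z⟩
    · exact ⟨z.2, inner_weightVec_root₂ z⟩
  · rintro ⟨hsum, hint⟩
    obtain ⟨a, ha⟩ := hint root₁ (by simp)
    obtain ⟨b, hb⟩ := hint root₂ (by simp)
    refine ⟨(a, b), ?_⟩
    rw [eq_inner_roots_smul_weights hsum, ha, hb, weightVec_apply]
    simp only [Int.cast_smul_eq_zsmul]

/-- The coordinates of `Λ2♯` in the basis `weight₁`, `weight₂`. -/
def weightEquiv : (ℤ × ℤ) ≃ₗ[ℤ] dualLatticeIn Λ2 :=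
  LinearEquiv.ofInjective weightVec weightVec_injective ≪≫ₗ LinearEquiv.ofEq _ _ range_weightVec

lemma coe_weightEquiv (z : ℤ × ℤ) : (weightEquiv z : E 3) = weightVec z := rfl

lemma root₁_eq_weightVec : root₁ = weightVec (4, -2) := by
  ext i
  fin_cases i <;> simp [weightVec_apply, root₁, weight₁, weight₂, intVec] <;> ring

lemma root₂_eq_weightVec : root₂ = weightVec (-2, 4) := by
  ext i
  fin_cases i <;> simp [weightVec_apply, root₂, weight₁, weight₂, intVec] <;> ring

lemma weightVec_mem_Λ2 {z : ℤ × ℤ} : weightVec z ∈ Λ2 ↔ 2 ∣ z.1 ∧ 6 ∣ z.2 - z.1 := by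
  simp only [Λ2_eq_span_roots, Submodule.mem_span_pair, root₁_eq_weightVec, root₂_eq_weightVec,
    ← map_smul, ← map_add, weightVec_injective.eq_iff, Prod.ext_iff, Prod.fst_add, Prod.snd_add,
    Prod.smul_fst, Prod.smul_snd, smul_eq_mul]
  constructor
  · rintro ⟨m, n, h⟩
    omega
  · rintro ⟨⟨s, hs⟩, ⟨t, ht⟩⟩
    exact ⟨s + t, s + 2 * t, by omega, by omega⟩

/-- The quadratic form `a² + ab + b²`, which is three times the squared norm on `Λ2♯` in weight
coordinates. -/
def weightForm (z : ℤ × ℤ) : ℤ := z.1 ^ 2 + z.1 * z.2 + z.2 ^ 2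

lemma norm_sq_weightVec (z : ℤ × ℤ) : ‖weightVec z‖ ^ 2 = weightForm z / 3 := by
  have dot_eq : ![2 * z.1 + z.2, z.2 - z.1, -z.1 - 2 * z.2] ⬝ᵥ
      ![2 * z.1 + z.2, z.2 - z.1, -z.1 - 2 * z.2] = 6 * weightForm z := by
    rw [Matrix.vec3_dotProduct', weightForm]
    ring
  rw [weightVec_eq_smul_intVec, ← real_inner_self_eq_norm_sq, inner_smul_intVec, dot_eq,
    Int.cast_mul]
  linear_combination (weightForm z / 6 : ℝ) * Real.sq_sqrt zero_le_two

lemma weightForm_pos {z : ℤ × ℤ} (hz : z ≠ 0) : 0 < weightForm z := by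
  have norm_pos : 0 < ‖weightVec z‖ ^ 2 := by
    have := (map_ne_zero_iff weightVec weightVec_injective).2 hz
    positivity
  rw [norm_sq_weightVec] at norm_pos
  exact_mod_cast pos_of_mul_pos_left norm_pos (by norm_num)

/-- The class modulo `Λ2` of the vector of `Λ2♯` with weight coordinates `z`. The two moduli are the
invariant factors of the Gram matrix `!![4, -2; -2, 4]` of `root₁`, `root₂`. -/
def residue : ℤ × ℤ →ₗ[ℤ] ZMod 2 × ZMod 6 :=
  ((Int.castAddHom (ZMod 2)).toIntLinearMap ∘ₗ LinearMap.fst ℤ ℤ ℤ).prod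
    ((Int.castAddHom (ZMod 6)).toIntLinearMap ∘ₗ (LinearMap.snd ℤ ℤ ℤ - LinearMap.fst ℤ ℤ ℤ))

lemma residue_apply (z : ℤ × ℤ) : residue z = ((z.1 : ZMod 2), ((z.2 - z.1 : ℤ) : ZMod 6)) := rfl

lemma residue_surjective : Function.Surjective residue := by
  rintro ⟨p, q⟩
  obtain ⟨a, rfl⟩ := ZMod.intCast_surjective p
  obtain ⟨b, rfl⟩ := ZMod.intCast_surjective q
  exact ⟨(a, a + b), by simp [residue_apply]⟩

lemma residue_eq_zero_iff {z : ℤ × ℤ} : residue z = 0 ↔ 2 ∣ z.1 ∧ 6 ∣ z.2 - z.1 := by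
  rw [residue_apply, Prod.mk_eq_zero, ZMod.intCast_zmod_eq_zero_iff_dvd,
    ZMod.intCast_zmod_eq_zero_iff_dvd]
  rfl

lemma ker_residue_comp_weightEquiv_symm :
    LinearMap.ker (residue ∘ₗ weightEquiv.symm.toLinearMap) =
      Λ2.comap (dualLatticeIn Λ2).subtype := by
  ext x
  obtain ⟨z, rfl⟩ := weightEquiv.surjective x
  simp [residue_eq_zero_iff, coe_weightEquiv, weightVec_mem_Λ2]

/-- The isomorphism `Λ2♯/Λ2 ≃ ℤ/2 × ℤ/6` induced by `residue`. -/
def discriminantEquiv : DualQuotIn Λ2 ≃ₗ[ℤ] ZMod 2 × ZMod 6 :=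
  Submodule.quotEquivOfEq _ _ ker_residue_comp_weightEquiv_symm.symm ≪≫ₗ
    (residue ∘ₗ weightEquiv.symm.toLinearMap).quotKerEquivOfSurjective
      (residue_surjective.comp weightEquiv.symm.surjective)

lemma discriminantEquiv_mk_weightEquiv (z : ℤ × ℤ) :
    discriminantEquiv (Submodule.Quotient.mk (weightEquiv z)) = residue z :=
  congrArg residue (weightEquiv.symm_apply_apply z)

lemma addOrderOf_discriminantEquiv (c : DualQuotIn Λ2) :
    addOrderOf (discriminantEquiv c) = addOrderOf c :=
  AddEquiv.addOrderOf_eq discriminantEquiv.toAddEquiv c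

lemma six_nsmul_dualQuotIn_Λ2 (c : DualQuotIn Λ2) : 6 • c = 0 := by
  apply discriminantEquiv.injective
  rw [map_nsmul, map_zero]
  generalize discriminantEquiv c = x
  revert x
  decide

lemma cosetMinNormIn_of_dvd_weightForm {c : DualQuotIn Λ2} {n : ℤ} (hc : c ≠ 0)
    (hdvd : ∀ z, residue z = discriminantEquiv c → n ∣ weightForm z)
    (hex : ∃ z, residue z = discriminantEquiv c ∧ weightForm z = n) :
    CosetMinNormIn Λ2 c (n / 3) := by
  constructor
  · obtain ⟨z, hz, rfl⟩ := hex
    refine ⟨weightEquiv z, discriminantEquiv.injective ?_, ?_⟩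
    · rw [discriminantEquiv_mk_weightEquiv, hz]
    · rw [coe_weightEquiv, norm_sq_weightVec]
  · rintro _ ⟨x, rfl, rfl⟩
    obtain ⟨z, rfl⟩ := weightEquiv.surjective x
    have hz : z ≠ 0 := by
      rintro rfl
      exact hc (by rw [map_zero, Submodule.Quotient.mk_zero])
    have hle : n ≤ weightForm z :=
      Int.le_of_dvd (weightForm_pos hz) (hdvd z (discriminantEquiv_mk_weightEquiv z).symm)
    rw [coe_weightEquiv, norm_sq_weightVec]
    gcongr

lemma three_dvd_weightForm {z : ℤ × ℤ} (h : 2 • residue z = 0) : 3 ∣ weightForm z := by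
  rw [← map_nsmul, residue_eq_zero_iff] at h
  simp only [Prod.smul_fst, Prod.smul_snd, Int.nsmul_eq_mul] at h
  obtain ⟨t, ht⟩ : 3 ∣ z.2 - z.1 := by omega
  refine ⟨z.1 ^ 2 + 3 * z.1 * t + 3 * t ^ 2, ?_⟩
  rw [weightForm, eq_add_of_sub_eq' ht]
  ring

lemma four_dvd_weightForm {z : ℤ × ℤ} (h : 3 • residue z = 0) : 4 ∣ weightForm z := by
  rw [← map_nsmul, residue_eq_zero_iff] at h
  simp only [Prod.smul_fst, Prod.smul_snd, Int.nsmul_eq_mul] at h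
  obtain ⟨s, hs⟩ : 2 ∣ z.1 := by omega
  obtain ⟨t, ht⟩ : 2 ∣ z.2 := by omega
  refine ⟨s ^ 2 + s * t + t ^ 2, ?_⟩
  rw [weightForm, hs, ht]
  ring

lemma exists_weightForm_eq_one {x : ZMod 2 × ZMod 6} (hx : addOrderOf x = 6) :
    ∃ z ∈ [((1 : ℤ), (0 : ℤ)), (-1, 0), (0, 1), (0, -1), (1, -1), (-1, 1)],
      residue z = x ∧ weightForm z = 1 := by
  simp only [addOrderOf_eq_iff (show 0 < 6 by norm_num), residue_apply, weightForm] at hx ⊢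
  revert x
  decide

lemma exists_weightForm_eq_three {x : ZMod 2 × ZMod 6} (hx : addOrderOf x = 2) :
    ∃ z ∈ [((1 : ℤ), (1 : ℤ)), (2, -1), (1, -2)], residue z = x ∧ weightForm z = 3 := by
  simp only [addOrderOf_eq_iff (show 0 < 2 by norm_num), residue_apply, weightForm] at hx ⊢
  revert x
  decide

lemma exists_weightForm_eq_four {x : ZMod 2 × ZMod 6} (hx : addOrderOf x = 3) :
    ∃ z ∈ [((2 : ℤ), (0 : ℤ)), (-2, 0)], residue z = x ∧ weightForm z = 4 := by
  simp only [addOrderOf_eq_iff (show 0 < 3 by norm_num), residue_apply, weightForm] at hx ⊢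
  revert x
  decide

lemma cosetMinNormIn_of_addOrderOf_eq_six {c : DualQuotIn Λ2} (hc : addOrderOf c = 6) :
    CosetMinNormIn Λ2 c (1 / 3) := by
  obtain ⟨z, -, hz⟩ :=
    exists_weightForm_eq_one ((addOrderOf_discriminantEquiv c).trans hc)
  have c_ne_zero : c ≠ 0 := ne_zero_of_one_lt_addOrderOf (by omega)
  simpa using
    cosetMinNormIn_of_dvd_weightForm c_ne_zero (fun w _ => one_dvd (weightForm w)) ⟨z, hz⟩

lemma cosetMinNormIn_of_addOrderOf_eq_two {c : DualQuotIn Λ2} (hc : addOrderOf c = 2) :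
    CosetMinNormIn Λ2 c 1 := by
  have horder := (addOrderOf_discriminantEquiv c).trans hc
  obtain ⟨z, -, hz⟩ := exists_weightForm_eq_three horder
  have c_ne_zero : c ≠ 0 := ne_zero_of_one_lt_addOrderOf (by omega)
  have three_dvd (w) (hw : residue w = discriminantEquiv c) : 3 ∣ weightForm w :=
    three_dvd_weightForm (hw ▸ addOrderOf_dvd_iff_nsmul_eq_zero.1 horder.dvd)
  simpa using cosetMinNormIn_of_dvd_weightForm c_ne_zero three_dvd ⟨z, hz⟩

lemma cosetMinNormIn_of_addOrderOf_eq_three {c : DualQuotIn Λ2} (hc : addOrderOf c = 3) :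
    CosetMinNormIn Λ2 c (4 / 3) := by
  have horder := (addOrderOf_discriminantEquiv c).trans hc
  obtain ⟨z, -, hz⟩ := exists_weightForm_eq_four horder
  have c_ne_zero : c ≠ 0 := ne_zero_of_one_lt_addOrderOf (by omega)
  have four_dvd (w) (hw : residue w = discriminantEquiv c) : 4 ∣ weightForm w :=
    four_dvd_weightForm (hw ▸ addOrderOf_dvd_iff_nsmul_eq_zero.1 horder.dvd)
  simpa using cosetMinNormIn_of_dvd_weightForm c_ne_zero four_dvd ⟨z, hz⟩

/-- The quotient `Λ₂♯/Λ₂` has exactly 12 elements: the zero coset, 6 cosets of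
minimal norm 1/3 and order 6, 3 cosets of minimal norm 1 and order 2, and
2 cosets of minimal norm 4/3 and order 3. -/
theorem Λ2_dual_quotient_classes :
    Nat.card (DualQuotIn Λ2) = 12 ∧
    (∀ c : DualQuotIn Λ2, c = 0 ∨
      (CosetMinNormIn Λ2 c (1/3) ∧ addOrderOf c = 6) ∨
      (CosetMinNormIn Λ2 c 1 ∧ addOrderOf c = 2) ∨
      (CosetMinNormIn Λ2 c (4/3) ∧ addOrderOf c = 3)) ∧
    {c : DualQuotIn Λ2 | CosetMinNormIn Λ2 c (1/3) ∧ addOrderOf c = 6}.ncard = 6 ∧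
    {c : DualQuotIn Λ2 | CosetMinNormIn Λ2 c 1 ∧ addOrderOf c = 2}.ncard = 3 ∧
    {c : DualQuotIn Λ2 | CosetMinNormIn Λ2 c (4/3) ∧ addOrderOf c = 3}.ncard = 2 := by
  refine ⟨?_, fun c => ?_, ?_, ?_, ?_⟩
  · rw [Nat.card_congr discriminantEquiv.toEquiv, Nat.card_prod, Nat.card_zmod, Nat.card_zmod]
  · rcases eq_zero_or_addOrderOf_eq_of_six_nsmul_eq_zero (six_nsmul_dualQuotIn_Λ2 c)
      with h | h | h | h
    · exact .inl h
    · exact .inr (.inl ⟨cosetMinNormIn_of_addOrderOf_eq_six h, h⟩)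
    · exact .inr (.inr (.inl ⟨cosetMinNormIn_of_addOrderOf_eq_two h, h⟩))
    · exact .inr (.inr (.inr ⟨cosetMinNormIn_of_addOrderOf_eq_three h, h⟩))
  · simp only [and_iff_right_of_imp cosetMinNormIn_of_addOrderOf_eq_six]
    rw [ncard_setOf_addOrderOf_eq discriminantEquiv.toAddEquiv,
      ncard_setOf_addOrderOf_eq_card_filter (by norm_num)]
    decide
  · simp only [and_iff_right_of_imp cosetMinNormIn_of_addOrderOf_eq_two]
    rw [ncard_setOf_addOrderOf_eq discriminantEquiv.toAddEquiv,
      ncard_setOf_addOrderOf_eq_card_filter (by norm_num)]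
    decide
  · simp only [and_iff_right_of_imp cosetMinNormIn_of_addOrderOf_eq_three]
    rw [ncard_setOf_addOrderOf_eq discriminantEquiv.toAddEquiv,
      ncard_setOf_addOrderOf_eq_card_filter (by norm_num)]
    decide
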